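/- Let F : ℝ → ℝ be twice differentiable with F″(p) ≥ γ for all p ∈ ℝ, for some constant γ > 0 (i.e., F is uniformly convex). Then F′ : ℝ → ℝ is a bijection, and the Legendre transform F*(q) = sup_{p ∈ ℝ} (p·q − F(p)) is differentiable with (F*)′ = (F′)^{-1}; that is, for every p ∈ ℝ, F* is differentiable at F′(p) with derivative p. -/

import Mathlib

/-! For a strongly convex `f` with modulus `m`, the gradient `g = ∇f(x)` supports `f` at `x` by a
parabola: `f y ≥ f x + ⟪g, y - x⟫ + (m / 2) ‖y - x‖²`. Maximising `⟪y, q⟫ - f y` against this bound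
and comparing with the choice `y = x` gives
`0 ≤ f* q - f* g - ⟪x, q - g⟫ ≤ ‖q - g‖² / (2 * m)`, so `f*` has gradient `x` at `g`.
The gradient map is strongly monotone, hence injective. It is surjective because `f - ⟪q, ·⟫` is
again strongly convex and bounded below: by the midpoint inequality its minimising sequences are
Cauchy, and at the minimum `∇f = q`. -/

open Set Filter Topology
open scoped InnerProductSpace

section NormedSpace

variable {E : Type*} [NormedAddCommGroup E] [NormedSpace ℝ E] {s : Set E} {f : E → ℝ} {x y : E}

theorem hasLineDerivAt_le_of_uniformConvexOn {φ : ℝ → ℝ} {d : ℝ} (hf : UniformConvexOn s φ f)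
    (hx : x ∈ s) (hy : y ∈ s) (hd : HasLineDerivAt ℝ f d x (y - x)) :
    d ≤ f y - f x - φ ‖y - x‖ := by
  have slope_le : ∀ᶠ t : ℝ in 𝓝[>] 0,
      t⁻¹ • (f (x + t • (y - x)) - f x) ≤ f y - f x - (1 - t) * φ ‖y - x‖ := by
    filter_upwards [Ioo_mem_nhdsGT one_pos] with t ⟨ht0, ht1⟩
    have hconv := hf.2 hy hx ht0.le (sub_nonneg.2 ht1.le) (add_sub_cancel t 1)
    have hpoint : t • y + (1 - t) • x = x + t • (y - x) := by module
    rw [hpoint, smul_eq_mul, smul_eq_mul] at hconv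
    rw [smul_eq_mul, inv_mul_le_iff₀ ht0]
    linarith
  have bound_tendsto : Tendsto (fun t : ℝ ↦ f y - f x - (1 - t) * φ ‖y - x‖) (𝓝[>] 0)
      (𝓝 (f y - f x - φ ‖y - x‖)) :=
    tendsto_nhdsWithin_of_tendsto_nhds (Continuous.tendsto' (by fun_prop) _ _ (by simp))
  exact le_of_tendsto_of_tendsto hd.tendsto_slope_zero_right bound_tendsto slope_le

theorem mul_sq_norm_sub_le_of_strongConvexOn {m c : ℝ} (hf : StrongConvexOn s m f)
    (hc : ∀ z ∈ s, c ≤ f z) (hx : x ∈ s) (hy : y ∈ s) :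
    m / 4 * ‖x - y‖ ^ 2 ≤ (f x - c) + (f y - c) := by
  have hmid : (1 / 2 : ℝ) • x + (1 / 2 : ℝ) • y ∈ s :=
    hf.1 hx hy one_half_pos.le one_half_pos.le (add_halves 1)
  have hconv := hf.2 hx hy one_half_pos.le one_half_pos.le (add_halves 1)
  rw [smul_eq_mul, smul_eq_mul] at hconv
  linarith [hc _ hmid]

theorem exists_isMinOn_of_strongConvexOn [CompleteSpace E] {m : ℝ} (hm : 0 < m)
    (hf : StrongConvexOn s m f) (hs : IsClosed s) (hne : s.Nonempty)
    (hlsc : LowerSemicontinuousOn f s) (hbdd : BddBelow (f '' s)) : ∃ x ∈ s, IsMinOn f s x := by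
  set c := sInf (f '' s)
  have hc : ∀ z ∈ s, c ≤ f z := fun z hz ↦ csInf_le hbdd (mem_image_of_mem f hz)
  obtain ⟨v, hanti, hlim, hv⟩ := exists_seq_tendsto_sInf (hne.image f) hbdd
  choose u hus huv using hv
  have dist_le : ∀ n k N, N ≤ n → N ≤ k → dist (u n) (u k) ≤ √(8 / m * (v N - c)) := by
    intro n k N hn hk
    have hsq := mul_sq_norm_sub_le_of_strongConvexOn hf hc (hus n) (hus k)
    rw [huv, huv] at hsq
    rw [dist_eq_norm]
    refine Real.le_sqrt_of_sq_le ?_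
    rw [div_mul_eq_mul_div, le_div_iff₀ hm]
    linarith [hanti hn, hanti hk]
  have bound_tendsto : Tendsto (fun N ↦ √(8 / m * (v N - c))) atTop (𝓝 0) := by
    simpa only [c, sub_self, mul_zero, Real.sqrt_zero] using
      ((hlim.sub_const c).const_mul (8 / m)).sqrt
  obtain ⟨x, hx⟩ := cauchySeq_tendsto_of_complete
    (cauchySeq_of_le_tendsto_0 _ dist_le bound_tendsto)
  have hxs : x ∈ s := hs.mem_of_tendsto hx (.of_forall hus)
  have hux : Tendsto u atTop (𝓝[s] x) := tendsto_nhdsWithin_iff.2 ⟨hx, .of_forall hus⟩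
  have hle : f x ≤ c := le_of_forall_lt_imp_le_of_dense fun a ha ↦
    ge_of_tendsto hlim <| (hux.eventually (hlsc x hxs a ha)).mono
      fun n hn ↦ (hn.trans_eq (huv n)).le
  exact ⟨x, hxs, fun z hz ↦ hle.trans (hc z hz)⟩

end NormedSpace

section InnerProductSpace

variable {E : Type*} [NormedAddCommGroup E] [InnerProductSpace ℝ E]
  {f : E → ℝ} {g h x y : E} {m : ℝ}

/-- The Legendre transform `f* q = sup_y (⟪y, q⟫ - f y)`, with `E` identified with its dual. It is
real-valued, so it takes the junk value `0` where the supremum is infinite. -/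
noncomputable def legendreTransform (f : E → ℝ) (q : E) : ℝ :=
  ⨆ y, (⟪y, q⟫_ℝ - f y)

/-- `g` is a strong subgradient of `f` at `x` with modulus `m`: the parabola of curvature `m` and
slope `g` through `(x, f x)` lies below the graph of `f`. For `m = 0` this is an ordinary
subgradient. -/
def IsStrongSubgradientAt (m : ℝ) (f : E → ℝ) (g x : E) : Prop :=
  ∀ y, f x + ⟪g, y - x⟫_ℝ + m / 2 * ‖y - x‖ ^ 2 ≤ f y

namespace IsStrongSubgradientAt

theorem mul_sq_norm_sub_le_inner (hx : IsStrongSubgradientAt m f g x)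
    (hy : IsStrongSubgradientAt m f h y) : m * ‖x - y‖ ^ 2 ≤ ⟪g - h, x - y⟫_ℝ := by
  have hxy := hx y
  have hyx := hy x
  rw [← neg_sub x y, inner_neg_right, norm_neg] at hxy
  rw [inner_sub_left]
  linarith

theorem point_unique (hx : IsStrongSubgradientAt m f g x) (hy : IsStrongSubgradientAt m f g y)
    (hm : 0 < m) : x = y := by
  have hle := hx.mul_sq_norm_sub_le_inner hy
  rw [sub_self, inner_zero_left] at hle
  have hsq : ‖x - y‖ ^ 2 ≤ 0 := nonpos_of_mul_nonpos_right hle hm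
  have hnorm : ‖x - y‖ = 0 := (sq_nonpos_iff _).1 hsq
  exact sub_eq_zero.1 (norm_eq_zero.1 hnorm)

theorem inner_sub_le (hx : IsStrongSubgradientAt m f g x) (hm : 0 < m) (q y : E) :
    ⟪y, q⟫_ℝ - f y ≤ ⟪x, q⟫_ℝ - f x + ‖q - g‖ ^ 2 / (2 * m) := by
  have young : ⟪q - g, y - x⟫_ℝ ≤ ‖q - g‖ ^ 2 / (2 * m) + m / 2 * ‖y - x‖ ^ 2 := by
    have hsq : ‖q - g‖ ^ 2 / (2 * m) + m / 2 * ‖y - x‖ ^ 2 - ‖q - g‖ * ‖y - x‖ =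
        (‖q - g‖ - m * ‖y - x‖) ^ 2 / (2 * m) := by
      field_simp
      ring
    have hnonneg : 0 ≤ (‖q - g‖ - m * ‖y - x‖) ^ 2 / (2 * m) := by positivity
    linarith [real_inner_le_norm (q - g) (y - x)]
  have hinner : ⟪y, q⟫_ℝ - ⟪x, q⟫_ℝ = ⟪q - g, y - x⟫_ℝ + ⟪g, y - x⟫_ℝ := by
    rw [← inner_sub_left, ← inner_add_left, sub_add_cancel, real_inner_comm]
  linarith [hx y]

theorem legendreTransform_le (hx : IsStrongSubgradientAt m f g x) (hm : 0 < m) (q : E) :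
    legendreTransform f q ≤ ⟪x, q⟫_ℝ - f x + ‖q - g‖ ^ 2 / (2 * m) :=
  ciSup_le (hx.inner_sub_le hm q)

theorem le_legendreTransform (hx : IsStrongSubgradientAt m f g x) (hm : 0 < m) (q y : E) :
    ⟪y, q⟫_ℝ - f y ≤ legendreTransform f q :=
  le_ciSup ⟨_, forall_mem_range.2 (hx.inner_sub_le hm q)⟩ y

theorem legendreTransform_eq (hx : IsStrongSubgradientAt m f g x) (hm : 0 < m) :
    legendreTransform f g = ⟪x, g⟫_ℝ - f x :=
  le_antisymm (by simpa using hx.legendreTransform_le hm g) (hx.le_legendreTransform hm g x)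

theorem hasGradientAt_legendreTransform [CompleteSpace E] (hx : IsStrongSubgradientAt m f g x)
    (hm : 0 < m) : HasGradientAt (legendreTransform f) x g := by
  rw [hasGradientAt_iff_isLittleO]
  refine Asymptotics.IsBigO.trans_isLittleO ?_
    (Asymptotics.isLittleO_pow_sub_sub g one_lt_two)
  refine .of_bound (1 / (2 * m)) (.of_forall fun q ↦ ?_)
  have hinner : ⟪x, q - g⟫_ℝ = ⟪x, q⟫_ℝ - ⟪x, g⟫_ℝ := inner_sub_right ..
  have hlower := hx.le_legendreTransform hm q x
  have hupper := hx.legendreTransform_le hm q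
  rw [hx.legendreTransform_eq hm, norm_pow, norm_norm, one_div_mul_eq_div,
    Real.norm_of_nonneg (by linarith)]
  linarith

end IsStrongSubgradientAt

variable [CompleteSpace E]

theorem isStrongSubgradientAt_of_strongConvexOn (hf : StrongConvexOn univ m f)
    (hg : HasGradientAt f g x) : IsStrongSubgradientAt m f g x := by
  intro y
  have hd : HasLineDerivAt ℝ f ⟪g, y - x⟫_ℝ x (y - x) := hg.hasFDerivAt.hasLineDerivAt (y - x)
  linarith [hasLineDerivAt_le_of_uniformConvexOn hf (mem_univ x) (mem_univ y) hd]

theorem injective_of_strongConvexOn_of_hasGradientAt {f' : E → E} (hm : 0 < m)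
    (hf : StrongConvexOn univ m f) (hf' : ∀ x, HasGradientAt f (f' x) x) :
    Function.Injective f' := by
  intro x y hxy
  have hx := isStrongSubgradientAt_of_strongConvexOn hf (hf' x)
  have hy := isStrongSubgradientAt_of_strongConvexOn hf (hf' y)
  exact (hxy ▸ hx).point_unique hy hm

theorem surjective_of_strongConvexOn_of_hasGradientAt {f' : E → E} (hm : 0 < m)
    (hf : StrongConvexOn univ m f) (hf' : ∀ x, HasGradientAt f (f' x) x) :
    Function.Surjective f' := by
  intro q
  have hconv : StrongConvexOn univ m (f - fun y ↦ ⟪q, y⟫_ℝ) := by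
    have hlin : ConcaveOn ℝ univ fun y ↦ ⟪q, y⟫_ℝ := (innerₛₗ ℝ q).concaveOn convex_univ
    simpa only [StrongConvexOn, add_zero] using UniformConvexOn.sub hf hlin.uniformConcaveOn_zero
  have hderiv : ∀ x, HasFDerivAt (f - fun y ↦ ⟪q, y⟫_ℝ) (innerSL ℝ (f' x) - innerSL ℝ q) x :=
    fun x ↦ (hf' x).hasFDerivAt.sub (innerSL ℝ q).hasFDerivAt
  have hcont : Continuous (f - fun y ↦ ⟪q, y⟫_ℝ) :=
    continuous_iff_continuousAt.2 fun x ↦ (hderiv x).continuousAt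
  have hbdd : BddBelow ((f - fun y ↦ ⟪q, y⟫_ℝ) '' univ) := by
    have hsub := isStrongSubgradientAt_of_strongConvexOn hf (hf' 0)
    refine ⟨-(⟪0, q⟫_ℝ - f 0 + ‖q - f' 0‖ ^ 2 / (2 * m)), forall_mem_image.2 fun y _ ↦ ?_⟩
    rw [Pi.sub_apply, real_inner_comm y q]
    linarith [hsub.inner_sub_le hm q y]
  obtain ⟨x, -, hmin⟩ := exists_isMinOn_of_strongConvexOn hm hconv isClosed_univ univ_nonempty
    (hcont.lowerSemicontinuous.lowerSemicontinuousOn _) hbdd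
  have hzero := (hmin.isLocalMin univ_mem).hasFDerivAt_eq_zero (hderiv x)
  exact ⟨x, innerSL_inj.1 (sub_eq_zero.1 hzero)⟩

theorem stmt_10_general {f' : E → E} (hm : 0 < m) (hf : StrongConvexOn univ m f)
    (hf' : ∀ x, HasGradientAt f (f' x) x) :
    Function.Bijective f' ∧ ∀ x, HasGradientAt (legendreTransform f) x (f' x) :=
  ⟨⟨injective_of_strongConvexOn_of_hasGradientAt hm hf hf',
    surjective_of_strongConvexOn_of_hasGradientAt hm hf hf'⟩,
    fun x ↦ (isStrongSubgradientAt_of_strongConvexOn hf (hf' x)).hasGradientAt_legendreTransform hm⟩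

end InnerProductSpace

theorem strongConvexOn_of_le_hasDerivWithinAt2 {D : Set ℝ} (hD : Convex ℝ D) {f f' f'' : ℝ → ℝ}
    {m : ℝ} (hf : ContinuousOn f D)
    (hf' : ∀ x ∈ interior D, HasDerivWithinAt f (f' x) (interior D) x)
    (hf'' : ∀ x ∈ interior D, HasDerivWithinAt f' (f'' x) (interior D) x)
    (hm : ∀ x ∈ interior D, m ≤ f'' x) : StrongConvexOn D m f := by
  rw [strongConvexOn_iff_convex]
  simp only [Real.norm_eq_abs, sq_abs]
  have hderiv : ∀ x ∈ interior D, HasDerivWithinAt (fun y ↦ f y - m / 2 * y ^ 2) (f' x - m * x)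
      (interior D) x := fun x hx ↦
    ((hf' x hx).sub (((hasDerivWithinAt_id x _).pow 2).const_mul (m / 2))).congr_deriv
      (by norm_num; ring)
  have hderiv2 : ∀ x ∈ interior D, HasDerivWithinAt (fun y ↦ f' y - m * y) (f'' x - m)
      (interior D) x := fun x hx ↦
    ((hf'' x hx).sub ((hasDerivWithinAt_id x _).const_mul m)).congr_deriv (by rw [mul_one])
  exact convexOn_of_hasDerivWithinAt2_nonneg hD (by fun_prop) hderiv hderiv2
    fun x hx ↦ sub_nonneg.2 (hm x hx)

theorem legendreTransform_real_eq_sSup (f : ℝ → ℝ) (q : ℝ) :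
    legendreTransform f q = sSup {y : ℝ | ∃ p : ℝ, y = p * q - f p} := by
  simp only [legendreTransform, iSup, range, RCLike.inner_apply, conj_trivial, eq_comm, mul_comm]

/-- For uniformly convex `F` (i.e. `F'' ≥ γ > 0`), the derivative `F'` is a bijection
of `ℝ` and the Legendre transform `F*` satisfies `(F*)' = (F')⁻¹`: for every `p`,
`F*` is differentiable at `F' p` with derivative `p`. -/
theorem stmt_10 (F F' F'' : ℝ → ℝ) (γ : ℝ) (hγ : 0 < γ)
    (hF : ∀ p : ℝ, HasDerivAt F (F' p) p)
    (hF' : ∀ p : ℝ, HasDerivAt F' (F'' p) p)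
    (hγle : ∀ p : ℝ, γ ≤ F'' p)
    (Fstar : ℝ → ℝ)
    (hFstar : ∀ q : ℝ, Fstar q = sSup {y : ℝ | ∃ p : ℝ, y = p * q - F p}) :
    Function.Bijective F' ∧ ∀ p : ℝ, HasDerivAt Fstar p (F' p) := by
  obtain rfl : Fstar = legendreTransform F :=
    funext fun q ↦ (hFstar q).trans (legendreTransform_real_eq_sSup F q).symm
  have hconv : StrongConvexOn univ γ F := strongConvexOn_of_le_hasDerivWithinAt2 convex_univ
    (fun p _ ↦ (hF p).continuousAt.continuousWithinAt) (fun p _ ↦ (hF p).hasDerivWithinAt)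
    (fun p _ ↦ (hF' p).hasDerivWithinAt) fun p _ ↦ hγle p
  obtain ⟨hbij, hgrad⟩ := stmt_10_general hγ hconv fun p ↦ (hF p).hasGradientAt'
  exact ⟨hbij, fun p ↦ (hgrad p).hasDerivAt'⟩
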